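/- arXiv:1812.05651 — 2 statements merged into one kernel-verified Lean document; each statement's English description precedes it below -/
import Mathlib

section
/- Let n be an even positive integer and let k be a finite field with 3^n elements (so k has characteristic 3). Then the number of pairs (x, y) ∈ k × k satisfying y^2 = x^3 - x, viewed as an integer, equals 3^n - 2·(-3)^(n/2). -/
/-!
Write `q = 3 ^ n`, `χ` for the quadratic character of `k` and `T = ∑ x, χ (x ^ 3 - x)`, so that
the number of affine points is `q + T`.

*Size of `T`.* Choose a primitive additive character `ψ` of `k` factoring through the trace to
`𝔽₃`; then `ψ (x ^ 3) = ψ x`, and therefore `∑ x, ψ (c * (x ^ 3 - x))` is `q` when `c ^ 3 = c`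
and `0` otherwise. Expanding `χ` as a Gauss sum `G` times its Fourier transform gives
`T * G = q * (χ 1 + χ (-1)) = 2 * q`. As `-1` is a square, `G ^ 2 = q`, hence `T ^ 2 = 4 * q`
(`charSum_sq`) and `T = ± 2 * 3 ^ (n / 2)`.

*Sign of `T`.* The Klein four-group generated by `x ↦ -x` and `x ↦ -1 / x` changes `x ^ 3 - x`
only by square factors (`-1` being a square), and acts freely away from `0`, `±1` and the square roots `±i` of `-1`.
Each orbit contributes `0` or `8` points, and the five exceptional values of `x` contribute `7`
points. Thus `q + T ≡ 7` modulo `8` (`charSum_mod_eight`), which singles out one of the two signs.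
-/

/-- A primitive additive character of a finite field of characteristic `3` that is invariant under
Frobenius: the composite of the trace to `𝔽₃` with a nontrivial character of `𝔽₃`. -/
lemma exists_frobenius_invariant_addChar (k : Type*) [Field k] [Fintype k] [CharP k 3] :
    ∃ ψ : AddChar k ℂ, ψ.IsPrimitive ∧ ∀ x, ψ (x ^ 3) = ψ x := by
  let : Algebra (ZMod 3) k := ZMod.algebra k 3
  have : Fact (Nat.Prime 3) := ⟨Nat.prime_three⟩
  refine ⟨(ZMod.stdAddChar (N := 3)).compAddMonoidHom
    (Algebra.trace (ZMod 3) k).toAddMonoidHom, AddChar.IsPrimitive.of_ne_one ?_, fun x => ?_⟩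
  · obtain ⟨b, hb⟩ := Algebra.trace_surjective (ZMod 3) k 1
    refine AddChar.ne_one_iff.2 ⟨b, ?_⟩
    intro h
    have h' : ZMod.stdAddChar (Algebra.trace (ZMod 3) k b) = 1 := h
    rw [hb, ← (ZMod.stdAddChar (N := 3)).map_zero_eq_one,
      ZMod.injective_stdAddChar.eq_iff] at h'
    exact one_ne_zero h'
  · have h := Algebra.trace_eq_of_algEquiv
      (FiniteField.frobeniusAlgEquivOfAlgebraic (ZMod 3) k) x
    rw [FiniteField.coe_frobeniusAlgEquivOfAlgebraic] at h
    simp only [ZMod.card] at h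
    change ZMod.stdAddChar (Algebra.trace (ZMod 3) k (x ^ 3))
      = ZMod.stdAddChar (Algebra.trace (ZMod 3) k x)
    rw [h]

/-- Frobenius invariance turns `ψ (c * (x ^ 3 - x))` into `ψ (x ^ 3 * (c - c ^ 3))`, and cubing
permutes `k`, so orthogonality of characters applies. -/
lemma sum_addChar_artinSchreier {k : Type*} [Field k] [Fintype k] [DecidableEq k] [CharP k 3]
    {ψ : AddChar k ℂ} (hψ : ψ.IsPrimitive) (hfrob : ∀ x, ψ (x ^ 3) = ψ x) (c : k) :
    ∑ x, ψ (c * (x ^ 3 - x)) = if c - c ^ 3 = 0 then (Fintype.card k : ℂ) else 0 := by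
  have : Fact (Nat.Prime 3) := ⟨Nat.prime_three⟩
  have h1 : ∀ x, ψ (c * (x ^ 3 - x)) = ψ (x ^ 3 * (c - c ^ 3)) := fun x => by
    rw [show c * (x ^ 3 - x) = c * x ^ 3 - c * x by ring, AddChar.map_sub_eq_div, ← hfrob (c * x),
      ← AddChar.map_sub_eq_div]
    congr 1
    ring
  have hb : Function.Bijective fun x : k => x ^ 3 :=
    Finite.injective_iff_bijective.1 (frobenius_inj k 3)
  rw [Finset.sum_congr rfl fun x _ => h1 x,
    hb.sum_comp fun x => ψ (x * (c - c ^ 3)), AddChar.sum_mulShift _ hψ]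
  split_ifs <;> simp

lemma charSum_sq {k : Type*} [Field k] [Fintype k] [DecidableEq k] [CharP k 3]
    (hneg : quadraticChar k (-1) = 1) :
    (∑ x : k, quadraticChar k (x ^ 3 - x)) ^ 2 = 4 * (Fintype.card k : ℤ) := by
  have : Fact (Nat.Prime 3) := ⟨Nat.prime_three⟩
  have hr : ringChar k ≠ 2 := by rw [ringChar.eq k 3]; decide
  have h2 : (1 : k) ≠ -1 := (Ring.neg_one_ne_one_of_char_ne_two hr).symm
  obtain ⟨ψ, hψ, hfrob⟩ := exists_frobenius_invariant_addChar k
  set χ : MulChar k ℂ := (quadraticChar k).ringHomComp (Int.castRingHom ℂ) with hχ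
  have hχa : ∀ a, χ a = (quadraticChar k a : ℂ) := fun a => rfl
  have hχ1 : χ ≠ 1 :=
    (MulChar.ringHomComp_ne_one_iff (RingHom.injective_int (Int.castRingHom ℂ))).2
      (quadraticChar_ne_one hr)
  have hχ2 : χ.IsQuadratic := (quadraticChar_isQuadratic k).comp _
  have hG : gaussSum χ ψ ^ 2 = Fintype.card k := by
    rw [gaussSum_sq hχ1 hχ2 hψ, hχa, hneg]; simp
  have hshift : ∀ a, χ a * gaussSum χ ψ = ∑ c, χ c * ψ (c * a) := fun a => by
    by_cases ha : a = 0
    · rw [ha, χ.map_zero, zero_mul]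
      simp [MulChar.sum_eq_zero_of_ne_one hχ1]
    · have h := gaussSum_mulShift_eq χ ψ (Units.mk0 a ha)
      rw [hχ2.inv] at h
      simp only [Units.val_mk0] at h
      rw [← h, gaussSum]
      simp [AddChar.mulShift_apply, mul_comm]
  have hfilter : (Finset.univ.filter fun c : k => c - c ^ 3 = 0) = {0, 1, -1} := by
    ext c
    simp only [Finset.mem_filter, Finset.mem_univ, true_and, Finset.mem_insert,
      Finset.mem_singleton]
    constructor
    · intro h
      have : c * ((c - 1) * (c + 1)) = 0 := by linear_combination -h
      rcases mul_eq_zero.1 this with h | h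
      · exact Or.inl h
      · rcases mul_eq_zero.1 h with h | h
        · exact Or.inr (Or.inl (sub_eq_zero.1 h))
        · exact Or.inr (Or.inr (eq_neg_of_add_eq_zero_left h))
    · rintro (rfl | rfl | rfl) <;> ring
  have hTG : (∑ x : k, χ (x ^ 3 - x)) * gaussSum χ ψ = 2 * Fintype.card k := by
    rw [Finset.sum_mul, Finset.sum_congr rfl fun x _ => hshift _, Finset.sum_comm]
    simp_rw [← Finset.mul_sum, sum_addChar_artinSchreier hψ hfrob, mul_ite, mul_zero]
    rw [← Finset.sum_filter, hfilter, Finset.sum_insert, Finset.sum_insert, Finset.sum_singleton]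
    · simp only [hχa, hneg]
      simp
      ring
    · simpa using h2
    · simp
  have hq : (Fintype.card k : ℂ) ≠ 0 := Nat.cast_ne_zero.2 Fintype.card_ne_zero
  have hT : (∑ x : k, χ (x ^ 3 - x)) ^ 2 = 4 * Fintype.card k := by
    apply mul_right_cancel₀ hq
    calc _ = ((∑ x : k, χ (x ^ 3 - x)) * gaussSum χ ψ) ^ 2 := by rw [mul_pow, hG]
      _ = _ := by rw [hTG]; ring
  simp only [hχa] at hT
  exact_mod_cast hT

/-- Here `quadraticChar k a + 1` is the number of square roots of `a`, so the sum is the number of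
affine points. -/
lemma charSum_mod_eight {k : Type*} [Field k] [Fintype k] [DecidableEq k] [CharP k 3]
    {i : k} (hi : i ^ 2 = -1) :
    (8 : ℤ) ∣ ∑ x : k, (quadraticChar k (x ^ 3 - x) + 1) - 7 := by
  have : Fact (Nat.Prime 3) := ⟨Nat.prime_three⟩
  have hr : ringChar k ≠ 2 := by rw [ringChar.eq k 3]; decide
  have h2 : (2 : k) ≠ 0 := Ring.two_ne_zero hr
  have hi0 : i ≠ 0 := by rintro rfl; simp at hi
  set g : k → ℤ := fun x => quadraticChar k (x ^ 3 - x) + 1 with hg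
  have hneg : quadraticChar k (-1) = 1 := by
    rw [← hi]; exact quadraticChar_sq_one' hi0
  have gneg : ∀ x, g (-x) = g x := fun x => by
    simp only [hg]
    rw [show (-x) ^ 3 - -x = -1 * (x ^ 3 - x) by ring, map_mul, hneg, one_mul]
  have ginv : ∀ x, x ≠ 0 → g x⁻¹ = g x := fun x hx => by
    simp only [hg]
    rw [show x⁻¹ ^ 3 - x⁻¹ = -1 * (x⁻¹ ^ 2) ^ 2 * (x ^ 3 - x) by field_simp; ring, map_mul,
      map_mul, hneg, quadraticChar_sq_one' (pow_ne_zero 2 (inv_ne_zero hx)), one_mul, one_mul]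
  have g0 : g 0 = 1 := by simp [hg]
  have g1 : g 1 = 1 := by simp [hg]
  have gi : g i = 2 := by
    simp only [hg]
    rw [show i ^ 3 - i = (i - 1) ^ 2 by linear_combination (i - 1) * hi,
      quadraticChar_sq_one']
    · norm_num
    · intro h
      apply h2
      have : i = 1 := sub_eq_zero.1 h
      rw [this] at hi
      linear_combination hi
  set S : Finset k := {0, 1, -1, i, -i} with hS
  have hi1 : i ≠ 1 := by rintro rfl; apply h2; linear_combination hi
  have hi2 : i ≠ -1 := by rintro rfl; apply h2; linear_combination hi
  have n1 : (1 : k) ≠ -1 := fun h => h2 (by linear_combination h)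
  have n2 : i ≠ -i := fun h => hi0 (by
    have : 2 * i = 0 := by linear_combination h
    exact (mul_eq_zero.1 this).resolve_left h2)
  have hSsum : ∑ x ∈ S, g x = 7 := by
    rw [hS, Finset.sum_insert, Finset.sum_insert, Finset.sum_insert, Finset.sum_insert,
      Finset.sum_singleton, gneg, gneg, g0, g1, gi]
    · norm_num
    · simpa using n2
    · simp only [Finset.mem_insert, Finset.mem_singleton, neg_inj, not_or]
      exact ⟨fun h => hi2 h.symm, fun h => hi1 h.symm⟩
    · simp only [Finset.mem_insert, Finset.mem_singleton, not_or]
      exact ⟨n1, fun h => hi1 h.symm, fun h => hi2 (by rw [h, neg_neg])⟩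
    · simp [hi0, Ne.symm hi0]
  have hcompl : ∑ x : k, g x - 7 = ∑ x ∈ Sᶜ, g x := by
    rw [← Finset.sum_add_sum_compl S g, hSsum]; ring
  change (8 : ℤ) ∣ ∑ x : k, g x - 7
  -- `x ^ 2 + x⁻¹ ^ 2` is constant exactly on the orbits of the Klein four-group
  rw [hcompl, ← Finset.sum_fiberwise_of_maps_to (s := Sᶜ)
    (t := Sᶜ.image fun x => x ^ 2 + x⁻¹ ^ 2) (g := fun x => x ^ 2 + x⁻¹ ^ 2)
    (fun x hx => Finset.mem_image_of_mem _ hx)]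
  refine Finset.dvd_sum fun t ht => ?_
  obtain ⟨x, hx, rfl⟩ := Finset.mem_image.1 ht
  have hmem : ∀ y, y ∈ Sᶜ ↔ y ≠ 0 ∧ y ^ 2 ≠ 1 ∧ y ^ 2 ≠ -1 := fun y => by
    rw [← hi, Ne, Ne, Ne, sq_eq_one_iff, sq_eq_sq_iff_eq_or_eq_neg]
    simp only [hS, Finset.mem_compl, Finset.mem_insert, Finset.mem_singleton]
    tauto
  obtain ⟨x0, x1, x2⟩ := (hmem x).1 hx
  have hfib : (Sᶜ.filter fun y => y ^ 2 + y⁻¹ ^ 2 = x ^ 2 + x⁻¹ ^ 2) = {x, -x, x⁻¹, -x⁻¹} := by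
    ext y
    simp only [Finset.mem_filter, Finset.mem_insert, Finset.mem_singleton, hmem]
    constructor
    · rintro ⟨⟨y0, -, -⟩, h⟩
      field_simp at h
      have h' : (y ^ 2 - x ^ 2) * ((y * x) ^ 2 - 1) = 0 := by linear_combination h
      rcases mul_eq_zero.1 h' with h | h
      · rcases sq_eq_sq_iff_eq_or_eq_neg.1 (sub_eq_zero.1 h) with h | h <;> simp [h]
      · rcases sq_eq_one_iff.1 (sub_eq_zero.1 h) with h | h
        · simp [eq_inv_of_mul_eq_one_left h]
        · have : -y * x = 1 := by linear_combination -h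
          have := eq_inv_of_mul_eq_one_left this
          simp [← this]
    · have e1 : x⁻¹ ^ 2 ≠ 1 := by simpa using x1
      have e2 : x⁻¹ ^ 2 ≠ -1 := fun h => x2 (by
        rw [inv_pow] at h
        rw [← inv_inv (x ^ 2), h]; norm_num)
      rintro (rfl | rfl | rfl | rfl)
      · exact ⟨⟨x0, x1, x2⟩, rfl⟩
      · exact ⟨⟨neg_ne_zero.2 x0, by rwa [neg_sq], by rwa [neg_sq]⟩, by rw [inv_neg, neg_sq, neg_sq]⟩
      · exact ⟨⟨inv_ne_zero x0, e1, e2⟩, by rw [inv_inv, add_comm]⟩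
      · exact ⟨⟨neg_ne_zero.2 (inv_ne_zero x0), by rwa [neg_sq], by rwa [neg_sq]⟩,
          by rw [inv_neg, neg_sq, neg_sq, inv_inv, add_comm]⟩
  have m1 : x ≠ -x := fun h => x0 (by
    have : 2 * x = 0 := by linear_combination h
    exact (mul_eq_zero.1 this).resolve_left h2)
  have m2 : x ≠ x⁻¹ := fun h => x1 (by
    have := mul_inv_cancel₀ x0
    rw [← h] at this; rw [sq, this])
  have m3 : x ≠ -x⁻¹ := fun h => x2 (by
    have := mul_inv_cancel₀ x0
    rw [show x⁻¹ = -x by rw [← neg_neg x⁻¹, ← h]] at this; linear_combination -this)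
  have m4 : x⁻¹ ≠ -x⁻¹ := fun h => m1 (by
    have := congrArg (·⁻¹) h
    simpa [inv_neg] using this)
  have hsum : ∑ y ∈ Sᶜ with y ^ 2 + y⁻¹ ^ 2 = x ^ 2 + x⁻¹ ^ 2, g y = 4 * g x := by
    rw [hfib, Finset.sum_insert, Finset.sum_insert, Finset.sum_insert, Finset.sum_singleton, gneg,
      gneg, ginv x x0]
    · ring
    · simpa using m4
    · simp only [Finset.mem_insert, Finset.mem_singleton, neg_inj, not_or]
      exact ⟨fun h => m3 (by rw [← h, neg_neg]), m2⟩
    · simp only [Finset.mem_insert, Finset.mem_singleton, not_or]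
      exact ⟨m1, m2, m3⟩
  have hf : x ^ 3 - x ≠ 0 := by
    rw [show x ^ 3 - x = x * (x ^ 2 - 1) by ring]
    exact mul_ne_zero x0 (sub_ne_zero.2 x1)
  rw [hsum]
  simp only [hg]
  rcases quadraticChar_dichotomy hf with h | h <;> rw [h] <;> norm_num

/-- Let `n` be an even positive integer and `k` a finite field with `3 ^ n` elements.
Then the number of pairs `(x, y) ∈ k × k` with `y ^ 2 = x ^ 3 - x`, viewed as an
integer, equals `3 ^ n - 2 * (-3) ^ (n / 2)`. -/
theorem count_points_y_sq_eq_x_cubed_sub_x_even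
    (n : ℕ) (hn : 0 < n) (heven : Even n)
    (k : Type*) [Field k] [Fintype k] (hcard : Fintype.card k = 3 ^ n) :
    (Nat.card {p : k × k // p.2 ^ 2 = p.1 ^ 3 - p.1} : ℤ)
      = 3 ^ n - 2 * (-3 : ℤ) ^ (n / 2) := by
  classical
  have : Fact (Nat.Prime 3) := ⟨Nat.prime_three⟩
  have : CharP k 3 := charP_of_card_eq_prime_pow hcard
  have hr : ringChar k ≠ 2 := by rw [ringChar.eq k 3]; decide
  obtain ⟨m, rfl⟩ := heven
  have hm : (m + m) / 2 = m := by omega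
  have hq : Fintype.card k = 9 ^ m := by rw [hcard, ← two_mul, pow_mul]; norm_num
  have hsq : IsSquare (-1 : k) := by
    rw [FiniteField.isSquare_neg_one_iff, hq, Nat.pow_mod]; norm_num
  obtain ⟨i, hi⟩ := hsq
  have hi : i ^ 2 = -1 := by rw [hi, sq]
  have hneg : quadraticChar k (-1) = 1 := by
    rw [← hi]; exact quadraticChar_sq_one' (by rintro rfl; simp at hi)
  have hN : (Nat.card {p : k × k // p.2 ^ 2 = p.1 ^ 3 - p.1} : ℤ)
      = ∑ x : k, (quadraticChar k (x ^ 3 - x) + 1) := by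
    have e : {p : k × k // p.2 ^ 2 = p.1 ^ 3 - p.1} ≃ Σ x : k, {y : k // y ^ 2 = x ^ 3 - x} :=
      { toFun := fun p => ⟨p.1.1, p.1.2, p.2⟩
        invFun := fun p => ⟨(p.1, p.2.1), p.2.2⟩
        left_inv := fun _ => rfl
        right_inv := fun _ => rfl }
    rw [Nat.card_congr e, Nat.card_eq_fintype_card, Fintype.card_sigma, Nat.cast_sum]
    refine Finset.sum_congr rfl fun x _ => ?_
    rw [← quadraticChar_card_sqrts hr, Set.toFinset_card]
    rfl
  have h8 := charSum_mod_eight hi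
  have hT := charSum_sq hneg
  rw [← hN] at h8
  rw [Finset.sum_add_distrib, Finset.sum_const, Finset.card_univ, hq, nsmul_one] at hN
  rw [hq] at hT
  rw [hm, ← two_mul, pow_mul]
  set T := ∑ x : k, quadraticChar k (x ^ 3 - x)
  rw [hN] at h8 ⊢
  have hT' : T ^ 2 = (2 * (-3 : ℤ) ^ m) ^ 2 := by
    rw [hT, mul_pow, ← pow_mul, mul_comm m 2, pow_mul]; norm_num
  have h9 : (9 : ℤ) ^ m ≡ 1 [ZMOD 8] := by
    simpa using (show (9 : ℤ) ≡ 1 [ZMOD 8] by decide).pow m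
  have h3 : (-3 : ℤ) ^ m ≡ 1 [ZMOD 4] := by
    simpa using (show (-3 : ℤ) ≡ 1 [ZMOD 4] by decide).pow m
  push_cast at h8 ⊢
  unfold Int.ModEq at h9 h3
  rcases sq_eq_sq_iff_eq_or_eq_neg.1 hT' with h | h <;> omega
end

section
/- Let k̄ be an algebraically closed field of characteristic 3 and let n be an odd positive integer. Then the number of pairs (x, y) ∈ k̄ × k̄ satisfying the system x = x^(3^n) + 1, y = y^(3^n), y^2 = x^3 - x, viewed as an integer, equals 3^n + (-3)^((n+1)/2). -/
/-!
Write `q = 3 ^ n` and `F = 𝔽_q`, with `Tr : F → 𝔽₃` the trace. If `x ^ 3 - x = z` then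
`x ^ q - x = ∑_{i < n} z ^ (3 ^ i)` telescopes, so for `z = y ^ 2` with `y ∈ F` the equation
`x = x ^ q + 1` says exactly that `Tr (y ^ 2) = -1`, and then all three Artin–Schreier roots `x`
occur. Hence the number of solutions is `3 * N` with `N = #{y ∈ F | Tr (y ^ 2) = -1}`
(`card_solutions`).

Let `χ` be the quadratic character of `F` and `M a = ∑_{Tr z = a} χ z` (`fiberSum`). Then
`N = 3 ^ (n - 1) + M (-1)`. As `n` is odd, `χ (-1) = -1`, so `M 0 = 0` and `M (-1) = -M 1`.

* The quadratic Gauss sum for the character `ζ ^ Tr` equals `M 1 * (ζ - ζ ^ 2)`; its square is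
  `-q`, which gives `3 * M 1 ^ 2 = q` (`three_mul_fiberSum_one_sq`).
* The polynomial `∑ X ^ (3 ^ i) - 1` is monic of odd degree `3 ^ (n - 1)` and its roots are exactly
  the elements of trace `1`, so these have product `1`. So the values `χ z = ±1` summed in `M 1`
  have product `1`, which forces `M 1 ≡ 3 ^ (n - 1) ≡ 1` mod `4` (`fiberSum_one_emod_four`).

The first fact determines `M 1` up to sign, and the second determines the sign:
`M 1 = (-3) ^ ((n - 1) / 2)`.
-/

namespace SigmaFrob

open Finset

/-- A sum of signs with product `1` is congruent modulo `4` to the number of signs. -/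
lemma sum_signs_emod_four {ι : Type*} (s : Finset ι) (f : ι → ℤ)
    (hf : ∀ i ∈ s, f i = 1 ∨ f i = -1) (hp : ∏ i ∈ s, f i = 1) :
    (4 : ℤ) ∣ ∑ i ∈ s, f i - #s := by
  classical
  -- Both possible values of the product must be tracked for the induction to go through.
  suffices h : (∏ i ∈ s, f i = 1 ∧ (4 : ℤ) ∣ ∑ i ∈ s, f i - #s) ∨
      (∏ i ∈ s, f i = -1 ∧ (4 : ℤ) ∣ ∑ i ∈ s, f i - #s + 2) by
    rcases h with h | h
    · exact h.2
    · omega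
  clear hp
  induction s using Finset.induction_on with
  | empty => simp
  | insert a s ha ih =>
    have ih := ih fun i hi => hf i (mem_insert_of_mem hi)
    rw [prod_insert ha, sum_insert ha, card_insert_of_notMem ha]
    rcases hf a (mem_insert_self a s) with h | h <;> rw [h] <;> push_cast <;> omega

/-! ### Character sums over trace fibres -/

section FiniteField

set_option linter.unusedSectionVars false

variable {F : Type*} [Field F] [Fintype F] [DecidableEq F] [Algebra (ZMod 3) F] {n : ℕ}

local notation "Tr" => Algebra.trace (ZMod 3) F

variable (F) in
/-- The sum of the quadratic character of `F` over the elements of trace `a`. -/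
noncomputable def fiberSum (a : ZMod 3) : ℤ :=
  ∑ z : F with Tr z = a, quadraticChar F z

variable (F) in
lemma ringChar_eq : ringChar F = 3 := by
  have := charP_of_injective_algebraMap (algebraMap (ZMod 3) F).injective 3
  exact ringChar.eq F 3

lemma finrank_eq (hF : Fintype.card F = 3 ^ n) : Module.finrank (ZMod 3) F = n := by
  have h := Module.card_eq_pow_finrank (K := ZMod 3) (V := F)
  rw [hF, ZMod.card] at h
  exact (Nat.pow_right_injective (by norm_num : 2 ≤ 3) h).symm

lemma algebraMap_trace (hF : Fintype.card F = 3 ^ n) (z : F) :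
    algebraMap (ZMod 3) F (Tr z) = ∑ i ∈ range n, z ^ 3 ^ i := by
  rw [FiniteField.algebraMap_trace_eq_sum_pow, finrank_eq hF]
  simp

lemma quadraticChar_neg_one' (hodd : Odd n) (hF : Fintype.card F = 3 ^ n) :
    quadraticChar F (-1) = -1 := by
  rw [quadraticChar_neg_one (by rw [ringChar_eq F]; norm_num), hF]
  obtain ⟨k, rfl⟩ := hodd
  rw [ZMod.χ₄_nat_eq_if_mod_four]
  have : 3 ^ (2 * k + 1) % 4 = 3 := by
    rw [pow_succ, pow_mul, Nat.mul_mod, Nat.pow_mod]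
    norm_num
  have h2 : 3 ^ (2 * k + 1) % 2 = 1 := by omega
  simp [this, h2]

lemma fiberSum_neg (hodd : Odd n) (hF : Fintype.card F = 3 ^ n) (a : ZMod 3) :
    fiberSum F (-a) = -fiberSum F a := by
  rw [fiberSum, fiberSum, ← sum_neg_distrib]
  refine sum_bij' (fun z _ => -z) (fun z _ => -z) ?_ ?_ ?_ ?_ ?_
  · intro z hz
    simp_all
  · intro z hz
    simp_all
  · simp
  · simp
  · intro z _
    rw [← neg_one_mul z, map_mul, quadraticChar_neg_one' hodd hF]
    simp

variable (F) in
lemma card_fiber_trace (a : ZMod 3) :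
    3 * #{z : F | Tr z = a} = Fintype.card F := by
  have hs := Algebra.trace_surjective (ZMod 3) F
  have h : ∀ b : ZMod 3, #{z : F | Tr z = b} = #{z : F | Tr z = a} := fun b =>
    AddMonoidHom.card_fiber_eq_of_mem_range (Tr).toAddMonoidHom (hs b) (hs a)
  rw [← card_univ, card_eq_sum_card_fiberwise (s := (univ : Finset F)) (f := Tr) (t := univ) (by simp), sum_congr rfl
    (fun b _ => h b)]
  simp

/-- The elements of trace `1` are the roots of a monic polynomial with constant term `-1`. -/
lemma prod_trace_one (hn : 0 < n) (hF : Fintype.card F = 3 ^ n) :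
    ∏ z : F with Tr z = 1, z = 1 := by
  open Polynomial in
  obtain ⟨m, rfl⟩ : ∃ m, n = m + 1 := ⟨n - 1, by omega⟩
  set A : Finset F := {z : F | Tr z = 1} with hA
  have hcard : #A = 3 ^ m := by
    have : 3 * #A = _ := card_fiber_trace F 1
    rw [hF, pow_succ] at this
    omega
  let r : F[X] := ∑ i ∈ range m, X ^ 3 ^ i - 1
  have hr : r.degree < (3 ^ m : ℕ) := by
    refine (degree_sub_le _ _).trans_lt (max_lt ?_ ?_)
    · refine (degree_sum_le _ _).trans_lt ?_
      rw [Finset.sup_lt_iff (WithBot.bot_lt_coe _)]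
      intro i hi
      rw [degree_X_pow]
      exact_mod_cast Nat.pow_lt_pow_right (by norm_num) (mem_range.mp hi)
    · rw [degree_one]
      exact_mod_cast Nat.pow_pos (by norm_num)
  let P : F[X] := X ^ 3 ^ m + r
  have hP : P.Monic := monic_X_pow_add hr
  have hdeg : P.natDegree = 3 ^ m := by
    refine natDegree_eq_of_degree_eq_some ?_
    rw [degree_add_eq_left_of_degree_lt (by rwa [degree_X_pow]), degree_X_pow]
  have hev : ∀ z, P.eval z = algebraMap (ZMod 3) F (Tr z) - 1 := by
    intro z
    rw [algebraMap_trace hF, sum_range_succ]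
    simp [P, r, eval_finsetSum]
    ring
  have hle : A.val ≤ P.roots := by
    refine (Multiset.le_iff_subset A.nodup).mpr fun z hz => ?_
    have hz : Tr z = 1 := by simpa [hA] using hz
    rw [mem_roots hP.ne_zero, IsRoot, hev, hz]
    simp
  have hdvd := (Multiset.prod_X_sub_C_dvd_iff_le_roots hP.ne_zero A.val).mpr hle
  have heq : P = (A.val.map fun a => X - C a).prod := by
    refine eq_of_monic_of_dvd_of_natDegree_le (monic_multiset_prod_of_monic _ _
      fun a _ => monic_X_sub_C a) hP hdvd ?_
    rw [natDegree_multiset_prod_X_sub_C_eq_card, hdeg]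
    exact hcard.ge
  have h0 := hev 0
  rw [heq, eval_multiset_prod, Multiset.map_map] at h0
  change ∏ a ∈ A, eval 0 (X - C a) = _ at h0
  have hodd : Odd (3 ^ m) := Odd.pow (by decide)
  simp only [eval_sub, eval_X, eval_C, zero_sub, map_zero] at h0
  rw [prod_neg, hcard, hodd.neg_one_pow] at h0
  simpa using h0

lemma fiberSum_one_emod_four (hodd : Odd n) (hF : Fintype.card F = 3 ^ n) :
    (4 : ℤ) ∣ fiberSum F 1 - 1 := by
  have h := sum_signs_emod_four {z : F | Tr z = 1} (fun z => quadraticChar F z) ?_ ?_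
  · have hc := card_fiber_trace F 1
    obtain ⟨k, rfl⟩ := hodd
    rw [hF, pow_succ, pow_mul] at hc
    have h9 : 9 ^ k % 4 = 1 := by
      rw [Nat.pow_mod]
      norm_num
    norm_num at hc
    rw [fiberSum]
    omega
  · intro z hz
    have hz : Tr z = 1 := by simpa using hz
    refine quadraticChar_dichotomy ?_
    rintro rfl
    simp at hz
  · rw [← map_prod, prod_trace_one hodd.pos hF, map_one]

/-- The evaluation of the square of the quadratic Gauss sum, in terms of `fiberSum F 1`. -/
lemma three_mul_fiberSum_one_sq (hodd : Odd n) (hF : Fintype.card F = 3 ^ n) :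
    3 * fiberSum F 1 ^ 2 = 3 ^ n := by
  have hchar : ringChar F ≠ 2 := by rw [ringChar_eq F]; norm_num
  let ψ : AddChar F ℂ := (ZMod.stdAddChar (N := 3)).compAddMonoidHom (Tr).toAddMonoidHom
  have hψ (z : F) : ψ z = ZMod.stdAddChar (N := 3) (Tr z) := rfl
  have hprim : ψ.IsPrimitive := by
    refine AddChar.IsPrimitive.of_ne_one fun h => ?_
    obtain ⟨z, hz⟩ := Algebra.trace_surjective (ZMod 3) F 1
    have h1 := hψ z
    rw [h, hz, AddChar.one_apply, ← AddChar.map_zero_eq_one (ZMod.stdAddChar (N := 3))] at h1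
    exact absurd (ZMod.injective_stdAddChar h1) (by decide)
  set ζ : ℂ := ZMod.stdAddChar (N := 3) 1 with hζ
  have hζ2 : ZMod.stdAddChar (N := 3) 2 = ζ ^ 2 := by
    rw [hζ, ← AddChar.map_nsmul_eq_pow]
    rfl
  have hζ3 : ζ ^ 3 = 1 := by
    rw [hζ, ← AddChar.map_nsmul_eq_pow, ← AddChar.map_zero_eq_one (ZMod.stdAddChar (N := 3))]
    rfl
  have hζ1 : ζ - 1 ≠ 0 := by
    rw [sub_ne_zero, hζ, ← AddChar.map_zero_eq_one (ZMod.stdAddChar (N := 3))]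
    exact fun h => absurd (ZMod.injective_stdAddChar h) (by decide)
  have hrel : ζ ^ 2 + ζ + 1 = 0 := by
    apply mul_left_cancel₀ hζ1
    linear_combination hζ3
  let χ : MulChar F ℂ := (quadraticChar F).ringHomComp (Int.castRingHom ℂ)
  have hχ : χ ≠ 1 :=
    (MulChar.ringHomComp_ne_one_iff Int.cast_injective).mpr (quadraticChar_ne_one hchar)
  have hsq := gaussSum_sq hχ ((quadraticChar_isQuadratic F).comp _) hprim
  have hM0 : fiberSum F 0 = 0 := by
    have := fiberSum_neg hodd hF 0
    rw [neg_zero] at this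
    omega
  have hM2 : fiberSum F 2 = -fiberSum F 1 := fiberSum_neg hodd hF 1
  have hG : gaussSum χ ψ = fiberSum F 1 * (ζ - ζ ^ 2) := by
    have h1 : gaussSum χ ψ = ∑ a : ZMod 3, fiberSum F a * ZMod.stdAddChar (N := 3) a := by
      rw [gaussSum, ← sum_fiberwise _ (fun z => Tr z)]
      refine sum_congr rfl fun a _ => ?_
      rw [fiberSum, Int.cast_sum, sum_mul]
      refine sum_congr rfl fun z hz => ?_
      rw [hψ, (mem_filter.mp hz).2]
      rfl
    rw [h1]
    change ∑ a : Fin 3, _ = _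
    rw [Fin.sum_univ_three]
    change (fiberSum F 0 : ℂ) * ZMod.stdAddChar (N := 3) 0 + fiberSum F 1 * ζ
      + fiberSum F 2 * ZMod.stdAddChar (N := 3) 2 = _
    rw [hM0, hM2, hζ2]
    push_cast
    ring
  have hneg : χ (-1) = -1 := by
    change ((quadraticChar F (-1) : ℤ) : ℂ) = -1
    rw [quadraticChar_neg_one' hodd hF]
    simp
  rw [hG, hneg, hF] at hsq
  have : (3 * fiberSum F 1 ^ 2 : ℂ) = 3 ^ n := by
    push_cast at hsq
    -- Modulo `ζ ^ 2 + ζ + 1`, the square `(ζ - ζ ^ 2) ^ 2` reduces to `-3`.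
    linear_combination -hsq + (fiberSum F 1 : ℂ) ^ 2 * (ζ ^ 2 - 3 * ζ + 3) * hrel
  exact_mod_cast this

lemma fiberSum_one (k : ℕ) (hF : Fintype.card F = 3 ^ (2 * k + 1)) :
    fiberSum F 1 = (-3) ^ k := by
  have hodd : Odd (2 * k + 1) := ⟨k, rfl⟩
  have h1 := three_mul_fiberSum_one_sq hodd hF
  have h4 := fiberSum_one_emod_four hodd hF
  have h2 : fiberSum F 1 ^ 2 = ((-3) ^ k) ^ 2 := by
    rw [← pow_mul, mul_comm k 2, pow_mul]
    rw [pow_succ 3, pow_mul] at h1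
    norm_num
    norm_num at h1
    linarith
  have h3 : (4 : ℤ) ∣ (-3) ^ k - 1 := by
    have := sub_dvd_pow_sub_pow (-3 : ℤ) 1 k
    norm_num at this
    exact this
  rcases sq_eq_sq_iff_eq_or_eq_neg.mp h2 with h | h
  · exact h
  · rw [h] at h4
    omega

/-- The number of solutions of `Tr (y ^ 2) = -1` over a field of odd degree over `𝔽₃`. -/
lemma card_trace_sq (k : ℕ) (hF : Fintype.card F = 3 ^ (2 * k + 1)) :
    (#{y : F | Tr (y ^ 2) = -1} : ℤ) = 3 ^ (2 * k) - (-3) ^ k := by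
  have hchar : ringChar F ≠ 2 := by rw [ringChar_eq F]; norm_num
  have h1 : #{y : F | Tr (y ^ 2) = -1} =
      ∑ z : F with Tr z = -1, #{y : F | y ^ 2 = z} := by
    rw [card_eq_sum_card_fiberwise (f := fun y => y ^ 2) (t := {z : F | Tr z = -1})]
    · refine sum_congr rfl fun z hz => congrArg card ?_
      ext y
      have hz := (mem_filter.mp hz).2
      simp only [mem_filter, mem_univ, true_and, and_iff_right_iff_imp]
      rintro rfl
      exact hz
    · intro y hy
      simpa using hy
  have h2 (z : F) : (#{y : F | y ^ 2 = z} : ℤ) = quadraticChar F z + 1 := by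
    rw [← quadraticChar_card_sqrts hchar]
    congr 2
    ext
    simp
  have h3 := card_fiber_trace F (-1)
  rw [hF, pow_succ] at h3
  have h4 : #{z : F | Tr z = -1} = 3 ^ (2 * k) := by omega
  rw [h1, Nat.cast_sum, sum_congr rfl (fun z _ => h2 z), sum_add_distrib]
  change fiberSum F (-1) + _ = _
  rw [fiberSum_neg ⟨k, rfl⟩ hF, fiberSum_one k hF, sum_const, h4]
  simp
  ring

end FiniteField

/-! ### Solutions over the algebraically closed field -/

section Solutions

set_option linter.unusedSectionVars false

variable {F : Type*} [Field F] [Fintype F] [DecidableEq F] [Algebra (ZMod 3) F]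
  {K : Type*} [Field K] [Algebra (ZMod 3) K] {n : ℕ}

local notation "Tr" => Algebra.trace (ZMod 3) F

lemma exists_preimage (hF : Fintype.card F = 3 ^ n) (i : F →ₐ[ZMod 3] K) {y : K}
    (hy : y = y ^ 3 ^ n) : ∃ u, i u = y := by
  classical
  open Polynomial in
  have h0 : (X ^ 3 ^ n - X : K[X]) ≠ 0 := by
    rw [← hF]
    exact FiniteField.X_pow_card_sub_X_ne_zero K Fintype.one_lt_card
  have hsub : univ.image i ⊆ (X ^ 3 ^ n - X : K[X]).roots.toFinset := by
    intro w hw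
    obtain ⟨u, -, rfl⟩ := mem_image.mp hw
    rw [Multiset.mem_toFinset, mem_roots h0]
    simp [← map_pow, ← hF, FiniteField.pow_card]
  have hle : #(X ^ 3 ^ n - X : K[X]).roots.toFinset ≤ #(univ.image i) := by
    rw [card_image_of_injective (f := i) _ i.injective, card_univ]
    refine (Multiset.toFinset_card_le _).trans ((card_roots' _).trans ?_)
    rw [← hF, FiniteField.X_pow_card_sub_X_natDegree_eq K Fintype.one_lt_card]
  have hy' : y ∈ univ.image i := by
    rw [eq_of_subset_of_card_le hsub hle, Multiset.mem_toFinset, mem_roots h0]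
    simp [← hy]
  obtain ⟨u, -, hu⟩ := mem_image.mp hy'
  exact ⟨u, hu⟩

/-- For `x` with `x ^ 3 - x ∈ F`, the difference `x ^ q - x` is the trace of `x ^ 3 - x`. -/
lemma pow_sub_self_eq_trace [CharP K 3] (hF : Fintype.card F = 3 ^ n) (i : F →ₐ[ZMod 3] K)
    {x : K} {z : F} (hx : i z = x ^ 3 - x) :
    x ^ 3 ^ n - x = algebraMap (ZMod 3) K (Tr z) := by
  rw [← i.commutes, algebraMap_trace hF, map_sum]
  have h (j : ℕ) : i (z ^ 3 ^ j) = x ^ 3 ^ (j + 1) - x ^ 3 ^ j := by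
    rw [map_pow, hx, sub_pow_char_pow, ← pow_mul, pow_succ']
  simp_rw [h]
  rw [sum_range_sub (fun j => x ^ 3 ^ j)]
  simp

/-- Over every `y ∈ F` with `Tr (y ^ 2) = -1` lie exactly three solutions, the translates by `𝔽₃`
of one root of `x ^ 3 - x = y ^ 2`. -/
lemma card_solutions [IsAlgClosed K] [CharP K 3] (hF : Fintype.card F = 3 ^ n)
    (i : F →ₐ[ZMod 3] K) :
    Nat.card {p : K × K //
        p.1 = p.1 ^ (3 ^ n) + 1 ∧ p.2 = p.2 ^ (3 ^ n) ∧ p.2 ^ 2 = p.1 ^ 3 - p.1} =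
      3 * #{y : F | Tr (y ^ 2) = -1} := by
  have hroot (y : F) : ∃ x : K, x ^ 3 - x = i y ^ 2 := by
    open Polynomial in
    let r : K[X] := -X - C (i y ^ 2)
    have hr : r.degree < (3 : ℕ) := by
      refine lt_of_le_of_lt (b := ((1 : ℕ) : WithBot ℕ)) ?_ (by norm_num)
      simp only [r]
      compute_degree
      simp
    obtain ⟨x, hx⟩ := IsAlgClosed.exists_root (X ^ 3 + r) (by
      rw [degree_add_eq_left_of_degree_lt (by rwa [degree_X_pow]), degree_X_pow]
      norm_num)
    refine ⟨x, ?_⟩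
    simp [IsRoot, r] at hx
    linear_combination hx
  choose x₀ hx₀ using hroot
  have hfix (c : ZMod 3) : algebraMap (ZMod 3) K c ^ 3 = algebraMap (ZMod 3) K c := by
    rw [← map_pow, ZMod.pow_card]
  have hsol (y : F) (c : ZMod 3) :
      i (y ^ 2) = (x₀ y + algebraMap (ZMod 3) K c) ^ 3 - (x₀ y + algebraMap (ZMod 3) K c) := by
    rw [add_pow_char, hfix, map_pow, ← hx₀]
    ring
  let f : {y : F // Tr (y ^ 2) = -1} × ZMod 3 → {p : K × K //
      p.1 = p.1 ^ (3 ^ n) + 1 ∧ p.2 = p.2 ^ (3 ^ n) ∧ p.2 ^ 2 = p.1 ^ 3 - p.1} := fun a =>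
    ⟨(x₀ a.1 + algebraMap (ZMod 3) K a.2, i a.1), by
      have h := pow_sub_self_eq_trace hF i (hsol a.1 a.2)
      rw [a.1.2, map_neg, map_one] at h
      refine ⟨by linear_combination -h, ?_, ?_⟩
      · change i a.1 = i a.1 ^ 3 ^ n
        rw [← map_pow, ← hF, FiniteField.pow_card]
      · rw [← hsol a.1 a.2, map_pow]⟩
  have hf : Function.Bijective f := by
    constructor
    · rintro ⟨⟨y, hy⟩, c⟩ ⟨⟨y', hy'⟩, c'⟩ h
      have h := congrArg Subtype.val h
      obtain ⟨h1, h2⟩ := Prod.mk.inj h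
      obtain rfl : y = y' := i.injective h2
      have : c = c' := (algebraMap (ZMod 3) K).injective (add_left_cancel h1)
      rw [this]
    · rintro ⟨⟨x, y⟩, h1, h2, h3⟩
      obtain ⟨u, rfl⟩ := exists_preimage hF i h2
      dsimp only at h1 h3
      have ht := pow_sub_self_eq_trace hF i ((map_pow i u 2).trans h3)
      have hu : Tr (u ^ 2) = -1 := by
        apply (algebraMap (ZMod 3) K).injective
        rw [← ht, map_neg, map_one]
        linear_combination -h1
      -- The difference of two roots of `X ^ 3 - X - u ^ 2` is fixed by Frobenius.
      have hd : x - x₀ u = (x - x₀ u) ^ 3 ^ 1 := by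
        rw [pow_one, sub_pow_char]
        linear_combination h3 + hx₀ u
      obtain ⟨c, hc⟩ := exists_preimage (F := ZMod 3) (n := 1) (by simp)
        (Algebra.ofId (ZMod 3) K) hd
      refine ⟨⟨⟨u, hu⟩, c⟩, Subtype.ext (Prod.ext ?_ rfl)⟩
      change x₀ u + algebraMap (ZMod 3) K c = x
      rw [Algebra.ofId_apply] at hc
      rw [hc]
      ring
  rw [← Nat.card_eq_of_bijective f hf, Nat.card_prod, Nat.card_zmod, Nat.card_eq_fintype_card,
    Fintype.card_subtype, mul_comm]

end Solutions

end SigmaFrob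


/-- Let `k̄` be an algebraically closed field of characteristic 3 and `n` an odd
positive integer. The number of pairs `(x, y) ∈ k̄ × k̄` with `x = x^(3^n) + 1`,
`y = y^(3^n)` and `y² = x³ - x`, viewed as an integer, equals
`3^n + (-3)^((n+1)/2)`. -/
theorem count_solutions_sigma_frob_system
    (K : Type*) [Field K] [IsAlgClosed K] [CharP K 3]
    (n : ℕ) (hn : 0 < n) (hodd : Odd n) :
    (Nat.card {p : K × K //
        p.1 = p.1 ^ (3 ^ n) + 1 ∧ p.2 = p.2 ^ (3 ^ n) ∧ p.2 ^ 2 = p.1 ^ 3 - p.1} : ℤ)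
      = 3 ^ n + (-3 : ℤ) ^ ((n + 1) / 2) := by
  classical
  have : Fact (Nat.Prime 3) := ⟨Nat.prime_three⟩
  let _ := ZMod.algebra K 3
  let _ := Fintype.ofFinite (GaloisField 3 n)
  have hF : Fintype.card (GaloisField 3 n) = 3 ^ n := by
    rw [← Nat.card_eq_fintype_card, GaloisField.card 3 n hn.ne']
  rw [SigmaFrob.card_solutions hF IsAlgClosed.lift]
  obtain ⟨k, rfl⟩ := hodd
  rw [Nat.cast_mul, SigmaFrob.card_trace_sq k hF,
    show (2 * k + 1 + 1) / 2 = k + 1 by omega, pow_succ, pow_succ]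
  push_cast
  ring
end
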